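/- Let M be a finite length graded S-module on P^n and let P_{n-k}(M) be its (n-k)-th syzygy bundle, presented by 0 → L'_{n+1} → ... → L'_{n-k+1} → P_{n-k}(M) → 0. If n ≥ 4k and k ≥ 2, then H^{2k-3}_*(S²P_{n-k}(M)) = 0 and H^{2k-2}_*(S²P_{n-k}(M)) = 0. -/

import Mathlib

/-!
Background setup (the paper works on projective space `ℙⁿ` over a field `K`):
we encode a coherent sheaf on `ℙⁿ_K` by a module `M` over the homogeneous coordinate
ring `S = K[X₀,…,Xₙ]` (namely `M = Γ_*` of the sheaf), and the intermediate cohomology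
module `H^i_*(F) = ⊕_ν H^i(ℙⁿ, F(ν))` (for `i ≥ 1`) by the local cohomology module
`H^{i+1}_𝔪(M)` at the irrelevant maximal ideal `𝔪 = (X₀,…,Xₙ)`, to which it is
canonically isomorphic.
-/

open CategoryTheory TensorProduct

noncomputable section

/-- The homogeneous coordinate ring `S = K[X₀,…,Xₙ]` of `ℙⁿ`. -/
abbrev PolyS (K : Type) [Field K] (n : ℕ) : Type := MvPolynomial (Fin (n+1)) K

variable (K : Type) [Field K] (n : ℕ)

/-- The irrelevant maximal ideal `𝔪 = (X₀,…,Xₙ)` of `S`. -/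
def irrel : Ideal (PolyS K n) := Ideal.span (Set.range MvPolynomial.X)

/-- `H^i_*` of the sheaf on `ℙⁿ` associated to the `S`-module `M`, encoded (for `i ≥ 1`)
as the local cohomology module `H^{i+1}_𝔪(M)`. -/
def Hstar (i : ℕ) (M : Type) [AddCommGroup M] [Module (PolyS K n) M] :
    ModuleCat (PolyS K n) :=
  (localCohomology (irrel K n) (i+1)).obj (ModuleCat.of (PolyS K n) M)

/-- `M` is (the module of sections `Γ_*` of) an algebraic vector bundle on `ℙⁿ`:
finitely generated, depth `≥ 2` at `𝔪` (i.e. `H⁰_𝔪(M) = H¹_𝔪(M) = 0`, so `M = Γ_*(M̃)`),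
and locally free at every prime other than the irrelevant ideal. -/
structure IsBundleModule (M : Type) [AddCommGroup M] [Module (PolyS K n) M] : Prop where
  finite : Module.Finite (PolyS K n) M
  h0 : Subsingleton ((localCohomology (irrel K n) 0).obj (ModuleCat.of (PolyS K n) M))
  h1 : Subsingleton ((localCohomology (irrel K n) 1).obj (ModuleCat.of (PolyS K n) M))
  locFree : ∀ p : PrimeSpectrum (PolyS K n), p.asIdeal ≠ irrel K n →
    Module.Free (Localization.AtPrime p.asIdeal) (LocalizedModule p.asIdeal.primeCompl M)

/-- `M` represents a vector bundle of rank two on `ℙⁿ`. -/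
structure IsRankTwoBundleModule (M : Type) [AddCommGroup M] [Module (PolyS K n) M]
    extends IsBundleModule K n M : Prop where
  rank2 : ∀ p : PrimeSpectrum (PolyS K n), p.asIdeal ≠ irrel K n →
    Module.rank (Localization.AtPrime p.asIdeal) (LocalizedModule p.asIdeal.primeCompl M) = 2

/-- A finite length module which is moreover supported at the irrelevant ideal: the
(ungraded avatar of the) notion of a *graded* `S`-module of finite length. -/
def IsGradedFiniteLength (N : Type) [AddCommGroup N] [Module (PolyS K n) N] : Prop :=
  IsFiniteLength (PolyS K n) N ∧
    ∃ c : ℕ, (irrel K n) ^ c ≤ Module.annihilator (PolyS K n) N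

/-- A minimal graded free resolution `⋯ → L₁ → L₀ → N → 0` of an `S`-module `N`
(minimality: all differentials have entries in the maximal ideal `𝔪`).
Here `d i : L (i+1) → L i` and `P_k(N)`, the `k`-th syzygy module, is `range (d k)`,
i.e. the image of `f_{k+1} : L_{k+1} → L_k`. -/
structure MinimalResolution (N : Type) [AddCommGroup N] [Module (PolyS K n) N] where
  L : ℕ → Type
  [addCommGroup : ∀ i, AddCommGroup (L i)]
  [module : ∀ i, Module (PolyS K n) (L i)]
  free : ∀ i, Module.Free (PolyS K n) (L i)
  finite : ∀ i, Module.Finite (PolyS K n) (L i)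
  d : ∀ i : ℕ, L (i+1) →ₗ[PolyS K n] L i
  aug : L 0 →ₗ[PolyS K n] N
  aug_surjective : Function.Surjective aug
  exact0 : LinearMap.range (d 0) = LinearMap.ker aug
  exact : ∀ i : ℕ, LinearMap.range (d (i+1)) = LinearMap.ker (d i)
  minimal : ∀ i : ℕ, LinearMap.range (d i) ≤ (irrel K n) • (⊤ : Submodule (PolyS K n) (L i))
  minimal0 : LinearMap.ker aug ≤ (irrel K n) • (⊤ : Submodule (PolyS K n) (L 0))

attribute [instance] MinimalResolution.addCommGroup MinimalResolution.module

/-- The second symmetric power `S²M` of a module. -/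
def Sym2M (R : Type) [CommRing R] (M : Type) [AddCommGroup M] [Module R M] : Type :=
  (TensorProduct R M M) ⧸
    Submodule.span R {z : TensorProduct R M M | ∃ x y : M, z = x ⊗ₜ[R] y - y ⊗ₜ[R] x}

instance (R : Type) [CommRing R] (M : Type) [AddCommGroup M] [Module R M] :
    AddCommGroup (Sym2M R M) := by unfold Sym2M; infer_instance

instance (R : Type) [CommRing R] (M : Type) [AddCommGroup M] [Module R M] :
    Module R (Sym2M R M) := by unfold Sym2M; infer_instance

end

/-!
On modules, `H^i_*(S²P)` is the local cohomology `H^{i+1}_𝔪(S²P)`, so the claim is a lower bound on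
depth, and depth is measured by the vanishing of `Ext^j(S/𝔪^t, -)`. Put `P_j` for the `j`-th
syzygy module. Since `M` is killed by a power of `𝔪`, the inclusion `P_{j+1} ⊆ L_{j+1}` splits away
from the origin, so that tensoring it or taking `S²` can only destroy injectivity on `𝔪`-torsion,
and torsion is excluded by positive depth. Hence `0 → Q ⊗ P_{j+1} → Q ⊗ L_{j+1} → Q ⊗ P_j → 0` is
exact, and, with `A(P) = ker (P ⊗ P → S²P)`, so are
`0 → A(P_{j+1}) → P_{j+1} ⊗ L_{j+1} → S²L_{j+1} → S²P_j → 0` and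
`0 → A(P_{j+1}) → P_{j+1} ⊗ P_{j+1} → S²P_{j+1} → 0`.
Using `A(P)` in place of `Λ²P` makes these sequences exact in every characteristic, including `2`.
Descending from `P_{n+1} = 0`, which is Hilbert's syzygy theorem, one finds
`depth S²P_j ≥ 2j + 1 - n`.
-/

universe u

section Depth

open CategoryTheory.Abelian

variable {R : Type u} [CommRing R] {I : Ideal R} {d : ℕ}
variable {X Y Z : Type u} [AddCommGroup X] [Module R X] [AddCommGroup Y] [Module R Y]
  [AddCommGroup Z] [Module R Z]

/-- The depth of `X` at `I` is at least `d`, expressed by the vanishing of `Ext` in degrees below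
`d`. All powers of `I` are tested because `localCohomology` is the colimit over them. -/
def HasDepthGE (I : Ideal R) (d : ℕ) (X : Type u) [AddCommGroup X] [Module R X] : Prop :=
  ∀ t : ℕ, ∀ j < d, Subsingleton (Abelian.Ext (ModuleCat.of R (R ⧸ I ^ t)) (ModuleCat.of R X) j)

theorem shortExact_of_exact {f : X →ₗ[R] Y} {g : Y →ₗ[R] Z} (hf : Function.Injective f)
    (hfg : Function.Exact f g) (hg : Function.Surjective g) :
    (ShortComplex.mk (ModuleCat.ofHom f) (ModuleCat.ofHom g)
      (ModuleCat.hom_ext hfg.linearMap_comp_eq_zero)).ShortExact :=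
  ModuleCat.shortComplex_shortExact _ hfg hf hg

namespace HasDepthGE

theorem mono {d' : ℕ} (h : HasDepthGE I d X) (hd : d' ≤ d) : HasDepthGE I d' X :=
  fun t j hj => h t j (hj.trans_le hd)

theorem of_subsingleton [Subsingleton X] : HasDepthGE I d X := fun t j _ => by
  have hX : 𝟙 (ModuleCat.of R X) = 0 := (ModuleCat.isZero_of_subsingleton _).eq_of_src _ _
  refine subsingleton_of_forall_eq 0 fun e => ?_
  rw [← Ext.comp_mk₀_id e, hX, Ext.mk₀_zero, Ext.comp_zero]

theorem of_retract (h : HasDepthGE I d Y) (f : X →ₗ[R] Y) (g : Y →ₗ[R] X)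
    (hgf : g ∘ₗ f = LinearMap.id) : HasDepthGE I d X := by
  intro t j hj
  have := h t j hj
  have hcomp : ModuleCat.ofHom f ≫ ModuleCat.ofHom g = 𝟙 (ModuleCat.of R X) :=
    ModuleCat.hom_ext hgf
  refine subsingleton_of_forall_eq 0 fun e => ?_
  rw [← Ext.comp_mk₀_id e, ← hcomp, ← Ext.mk₀_comp_mk₀, ← Ext.comp_assoc_of_third_deg_zero,
    Subsingleton.elim (e.comp _ _) 0, Ext.zero_comp]

theorem of_linearEquiv (h : HasDepthGE I d Y) (e : X ≃ₗ[R] Y) : HasDepthGE I d X :=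
  h.of_retract e.toLinearMap e.symm.toLinearMap e.symm_comp

variable {f : X →ₗ[R] Y} {g : Y →ₗ[R] Z}

theorem of_exact_middle (hf : Function.Injective f) (hfg : Function.Exact f g)
    (hg : Function.Surjective g) (hX : HasDepthGE I d X) (hZ : HasDepthGE I d Z) :
    HasDepthGE I d Y := by
  intro t j hj
  have := hX t j hj
  have := hZ t j hj
  refine subsingleton_of_forall_eq 0 fun e => ?_
  obtain ⟨x, rfl⟩ := Ext.covariant_sequence_exact₂ _ (shortExact_of_exact hf hfg hg) e
    (Subsingleton.elim _ _)
  rw [Subsingleton.elim x 0, Ext.zero_comp]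

theorem of_exact_right (hf : Function.Injective f) (hfg : Function.Exact f g)
    (hg : Function.Surjective g) (hX : HasDepthGE I (d + 1) X) (hY : HasDepthGE I d Y) :
    HasDepthGE I d Z := by
  intro t j hj
  have := hX t (j + 1) (by lia)
  have := hY t j hj
  refine subsingleton_of_forall_eq 0 fun e => ?_
  obtain ⟨y, rfl⟩ := Ext.covariant_sequence_exact₃ _ (shortExact_of_exact hf hfg hg) e rfl
    (Subsingleton.elim _ _)
  rw [Subsingleton.elim y 0, Ext.zero_comp]

theorem of_exact_left (hf : Function.Injective f) (hfg : Function.Exact f g)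
    (hg : Function.Surjective g) (hY : HasDepthGE I (d + 1) Y) (hZ : HasDepthGE I d Z) :
    HasDepthGE I (d + 1) X := by
  intro t j hj
  have := hY t j hj
  cases j with
  | zero =>
    have : Mono (ModuleCat.ofHom f) := (ModuleCat.mono_iff_injective _).2 hf
    exact (Ext.postcomp_mk₀_injective_of_mono _ (ModuleCat.ofHom f)).subsingleton
  | succ j =>
    have := hZ t j (by lia)
    refine subsingleton_of_forall_eq 0 fun e => ?_
    obtain ⟨z, rfl⟩ := Ext.covariant_sequence_exact₁ _ (shortExact_of_exact hf hfg hg) e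
      (Subsingleton.elim _ _) rfl
    rw [Subsingleton.elim z 0, Ext.zero_comp]

theorem pi (hX : HasDepthGE I d X) : ∀ r : ℕ, HasDepthGE I d (Fin r → X)
  | 0 => of_subsingleton
  | r + 1 =>
    have hprod : HasDepthGE I d (X × (Fin r → X)) :=
      of_exact_middle LinearMap.inl_injective Function.Exact.inl_snd
        (LinearMap.snd_surjective (R := R)) hX (pi hX r)
    hprod.of_linearEquiv (Fin.consLinearEquiv R fun _ => X).symm

theorem tensorProduct_free (hX : HasDepthGE I d X) (F : Type u) [AddCommGroup F] [Module R F]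
    [Module.Free R F] [Module.Finite R F] : HasDepthGE I d (X ⊗[R] F) := by
  obtain _ | _ := subsingleton_or_nontrivial R
  · have : Subsingleton (X ⊗[R] F) := Module.subsingleton R _
    exact of_subsingleton
  · let b := Module.finBasis R F
    exact (hX.pi _).of_linearEquiv
      (b.equivFun.lTensor X ≪≫ₗ TensorProduct.piScalarRight R R X _)

theorem of_free (hR : HasDepthGE I d R) (F : Type u) [AddCommGroup F] [Module R F]
    [Module.Free R F] [Module.Finite R F] : HasDepthGE I d F :=
  (hR.tensorProduct_free F).of_linearEquiv (TensorProduct.lid R F).symm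

theorem of_isRegular [IsNoetherianRing R] [Module.Finite R X] {rs : List R}
    (hI : ∀ r ∈ rs, r ∈ I) (hrs : RingTheory.Sequence.IsRegular X rs)
    (hX : I • (⊤ : Submodule R X) < ⊤) : HasDepthGE I rs.length X := by
  intro t j hj
  refine ModuleCat.subsingleton_ext_of_exists_isRegular I _ ?_ _ hX rs hI hrs j hj
  rw [Module.support_eq_zeroLocus, Ideal.annihilator_quotient]
  exact fun p hp => p.isPrime.le_of_pow_le hp

theorem of_exact_four {W : Type u} [AddCommGroup W] [Module R W] {h : Z →ₗ[R] W}
    (hf : Function.Injective f) (hfg : Function.Exact f g) (hgh : Function.Exact g h)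
    (hh : Function.Surjective h) (hX : HasDepthGE I (d + 2) X) (hY : HasDepthGE I (d + 1) Y)
    (hZ : HasDepthGE I d Z) : HasDepthGE I d W :=
  have hrange : HasDepthGE I (d + 1) (LinearMap.range g) :=
    of_exact_right hf (fun y => by rw [← hfg y]; exact Subtype.ext_iff) g.surjective_rangeRestrict
      hX hY
  of_exact_right (LinearMap.range g).injective_subtype
    (LinearMap.exact_iff.2 (by rw [hgh.linearMap_ker_eq, Submodule.range_subtype])) hh hrange hZ

theorem eq_zero_of_forall_pow_smul_eq_zero [IsNoetherianRing R] (hX : HasDepthGE I (d + 1) X)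
    {x : X} (hx : ∀ a ∈ I, ∃ m : ℕ, a ^ m • x = 0) : x = 0 := by
  have hle : I ≤ (Ideal.torsionOf R X x).radical := fun a ha => hx a ha
  obtain ⟨t, ht⟩ := Ideal.exists_pow_le_of_le_radical_of_fg hle (IsNoetherian.noetherian I)
  have := hX t 0 d.succ_pos
  let φ : R ⧸ I ^ t →ₗ[R] X := (I ^ t).liftQ (LinearMap.toSpanSingleton R X x) ht
  have hφ : ModuleCat.ofHom φ = 0 :=
    (Ext.mk₀_eq_zero_iff (ModuleCat.ofHom φ)).1 (Subsingleton.elim _ _)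
  calc x = φ (Submodule.Quotient.mk 1) := (one_smul R x).symm
    _ = 0 := LinearMap.congr_fun (congrArg ModuleCat.Hom.hom hφ) _

end HasDepthGE

theorem isZero_ext_of_subsingleton_ext (N M : ModuleCat.{u} R) (j : ℕ)
    [Subsingleton (Abelian.Ext N M j)] :
    Limits.IsZero (((_root_.Ext R (ModuleCat.{u} R) j).obj (Opposite.op N)).obj M) := by
  let P := ProjectiveResolution.of N
  refine Limits.IsZero.of_iso ?_ (P.isoExt j M)
  rw [← HomologicalComplex.exactAt_iff_isZero_homology]
  cases j with
  | zero =>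
    rw [HomologicalComplex.exactAt_iff' _ 0 0 1 (by simp) (by simp),
      ShortComplex.moduleCat_exact_iff]
    intro (f : P.complex.X 0 ⟶ M) (hf : P.complex.d 1 0 ≫ f = 0)
    have hdesc : P.exact₀.desc f hf = 0 :=
      (Ext.mk₀_eq_zero_iff (M := N) (P.exact₀.desc f hf)).1 (Subsingleton.elim _ _)
    have hf₀ : f = 0 := by rw [← P.exact₀.g_desc f hf, hdesc, Limits.comp_zero]
    exact ⟨0, by rw [map_zero, hf₀]; rfl⟩
  | succ j =>
    rw [HomologicalComplex.exactAt_iff' _ j (j + 1) (j + 2) (by simp) (by simp),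
      ShortComplex.moduleCat_exact_iff]
    intro (f : P.complex.X (j + 1) ⟶ M) (hf : P.complex.d (j + 2) (j + 1) ≫ f = 0)
    exact (P.extMk_eq_zero_iff f (j + 2) rfl hf j rfl).1 (Subsingleton.elim _ _)

theorem HasDepthGE.subsingleton_localCohomology (hX : HasDepthGE I d X) {j : ℕ} (hj : j < d) :
    Subsingleton ((localCohomology I j).obj (ModuleCat.of R X)) := by
  have : Limits.HasColimit (localCohomology.diagram (localCohomology.idealPowersDiagram I) j) :=
    localCohomology.hasColimitDiagram.{u, 0} _ _
  have hcolim := Limits.isColimitOfPreserves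
    ((evaluation (ModuleCat.{u} R) (ModuleCat.{u} R)).obj (ModuleCat.of R X))
    (Limits.colimit.isColimit
      (localCohomology.diagram (localCohomology.idealPowersDiagram I) j))
  refine ModuleCat.subsingleton_of_isZero <| (Limits.IsZero.iff_id_eq_zero _).2 <|
    hcolim.hom_ext fun t => ?_
  have := hX t.unop.unop j hj
  exact (isZero_ext_of_subsingleton_ext (ModuleCat.of R (R ⧸ I ^ t.unop.unop))
    (ModuleCat.of R X) j).eq_of_src _ _

end Depth

section SplitsAwayFrom

variable {R : Type u} [CommRing R] {I : Ideal R} {X Y : Type u} [AddCommGroup X] [Module R X]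
  [AddCommGroup Y] [Module R Y]

/-- `f` is locally a split injection off the zero locus of `I`, in algebraic form: for `a ∈ I`,
a retraction of `f` over the ring localized at `a` becomes, after clearing denominators, a map `r`
with `r ∘ f = a ^ m`. -/
def SplitsAwayFrom (I : Ideal R) (f : X →ₗ[R] Y) : Prop :=
  ∀ a ∈ I, ∃ (m : ℕ) (r : Y →ₗ[R] X), r ∘ₗ f = a ^ m • LinearMap.id

namespace SplitsAwayFrom

variable {f : X →ₗ[R] Y}

theorem rTensor (hf : SplitsAwayFrom I f) (Q : Type u) [AddCommGroup Q] [Module R Q] :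
    SplitsAwayFrom I (f.rTensor Q) := fun a ha => by
  obtain ⟨m, r, hr⟩ := hf a ha
  exact ⟨m, r.rTensor Q, by rw [← LinearMap.rTensor_comp, hr, LinearMap.rTensor_smul,
    LinearMap.rTensor_id]⟩

theorem lTensor (hf : SplitsAwayFrom I f) (Q : Type u) [AddCommGroup Q] [Module R Q] :
    SplitsAwayFrom I (f.lTensor Q) := fun a ha => by
  obtain ⟨m, r, hr⟩ := hf a ha
  exact ⟨m, r.lTensor Q, by rw [← LinearMap.lTensor_comp, hr, LinearMap.lTensor_smul,
    LinearMap.lTensor_id]⟩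

theorem injective [IsNoetherianRing R] {d : ℕ} (hf : SplitsAwayFrom I f)
    (hX : HasDepthGE I (d + 1) X) : Function.Injective f :=
  (injective_iff_map_eq_zero f).2 fun x hx => hX.eq_zero_of_forall_pow_smul_eq_zero fun a ha => by
    obtain ⟨m, r, hr⟩ := hf a ha
    refine ⟨m, ?_⟩
    calc a ^ m • x = r (f x) := (LinearMap.congr_fun hr x).symm
      _ = 0 := by rw [hx, map_zero]

end SplitsAwayFrom

end SplitsAwayFrom

section Complex

open Submodule RingTheory.Sequence

/-- Bruns–Herzog, *Cohen–Macaulay rings*, Proposition 1.1.5. -/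
theorem exact_mapQ_ofList_smul_top {R : Type*} [CommRing R] (rs : List R) {C : ℕ → Type*}
    [∀ i, AddCommGroup (C i)] [∀ i, Module R (C i)] (d : ∀ i, C (i + 1) →ₗ[R] C i)
    (hd : ∀ i, Function.Exact (d (i + 1)) (d i)) (hC : ∀ i, IsWeaklyRegular (C i) rs)
    {i : ℕ} (hi : rs.length ≤ i) :
    Function.Exact (mapQ _ _ _ (smul_top_le_comap_smul_top (Ideal.ofList rs) (d (i + 1))))
      (mapQ _ _ _ (smul_top_le_comap_smul_top (Ideal.ofList rs) (d i))) := by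
  induction rs generalizing C i with
  | nil =>
    apply (Function.Exact.iff_of_ladder_linearEquiv ?_ ?_).mp (hd i)
    any_goals exact quotEquivOfEqBot _ (by rw [Ideal.ofList_nil, bot_smul])
    all_goals exact quot_hom_ext _ _ _ fun _ => rfl
  | cons r rs ih =>
    obtain ⟨i, rfl⟩ := Nat.exists_eq_add_of_le' (Nat.one_le_of_lt hi)
    have hreg := fun j => (isWeaklyRegular_cons_iff (C j) r rs).1 (hC j)
    have hquot := ih (fun j => QuotSMulTop.map r (d (j + 1)))
      (fun j => QuotSMulTop.map_first_exact_on_four_term_exact_of_isSMulRegular_last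
        (hd (j + 1)) (hd j) (hreg j).1)
      (fun j => (hreg (j + 1)).2) (Nat.le_of_succ_le_succ hi)
    exact (Function.Exact.iff_of_ladder_linearEquiv
      (quotOfListConsSMulTopEquivQuotSMulTopInner_naturality r rs (d (i + 2))).symm
      (quotOfListConsSMulTopEquivQuotSMulTopInner_naturality r rs (d (i + 1))).symm).mp hquot

theorem isWeaklyRegular_of_flat {R : Type*} [CommRing R] {rs : List R} (h : IsWeaklyRegular R rs)
    (F : Type*) [AddCommGroup F] [Module R F] [Module.Flat R F] : IsWeaklyRegular F rs :=
  ((TensorProduct.rid R F).isWeaklyRegular_congr rs).1 h.isWeaklyRegular_lTensor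

theorem subsingleton_of_smul_top_eq_top {R : Type*} [CommRing R] {F : Type*} [AddCommGroup F]
    [Module R F] [Module.Free R F] {I : Ideal R} (hI : I ≠ ⊤) (h : I • (⊤ : Submodule R F) = ⊤) :
    Subsingleton F := by
  by_contra hF
  rw [not_subsingleton_iff_nontrivial] at hF
  obtain ⟨m, hm, hIm⟩ := I.exists_le_maximal hI
  refine Module.FaithfullyFlat.submodule_ne_top (R := R) (M := F) hm (top_le_iff.1 ?_)
  exact h.symm.le.trans (Submodule.smul_mono_left hIm)

theorem subsingleton_of_range_le_smul_top {R : Type*} [CommRing R] {rs : List R}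
    (hR : IsWeaklyRegular R rs) (hrs : Ideal.ofList rs ≠ ⊤) {C : ℕ → Type*}
    [∀ i, AddCommGroup (C i)] [∀ i, Module R (C i)] [∀ i, Module.Free R (C i)]
    (d : ∀ i, C (i + 1) →ₗ[R] C i) (hd : ∀ i, Function.Exact (d (i + 1)) (d i))
    (hmin : ∀ i, LinearMap.range (d i) ≤ Ideal.ofList rs • (⊤ : Submodule R (C i)))
    {i : ℕ} (hi : rs.length < i) : Subsingleton (C i) := by
  obtain ⟨i, rfl⟩ := Nat.exists_eq_add_of_le' (Nat.one_le_of_lt hi)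
  have hzero (j : ℕ) : mapQ _ _ _ (smul_top_le_comap_smul_top (Ideal.ofList rs) (d j)) = 0 :=
    quot_hom_ext _ _ _ fun x => (Quotient.mk_eq_zero _).2 (hmin j ⟨x, rfl⟩)
  have hexact := exact_mapQ_ofList_smul_top rs d hd
    (fun j => isWeaklyRegular_of_flat hR (C j)) (Nat.le_of_lt_succ hi)
  rw [hzero, hzero] at hexact
  have : Subsingleton (C (i + 1) ⧸ Ideal.ofList rs • (⊤ : Submodule R (C (i + 1)))) :=
    subsingleton_of_forall_eq 0 fun x => by
      obtain ⟨y, rfl⟩ := (hexact x).1 rfl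
      rfl
  exact subsingleton_of_smul_top_eq_top hrs (Submodule.Quotient.subsingleton_iff.1 this)

end Complex

section Polynomial

open MvPolynomial RingTheory.Sequence

theorem ofList_take_ofFn_X (A : Type*) [CommRing A] (m i : ℕ) :
    Ideal.ofList ((List.ofFn (X : Fin m → MvPolynomial (Fin m) A)).take i) =
      Ideal.span (X '' {j : Fin m | j.val < i}) := by
  refine congrArg Ideal.span (Set.ext fun p => ?_)
  simp only [Set.mem_ofPred_eq, List.mem_take_iff_getElem, Set.mem_image, List.length_ofFn,
    List.getElem_ofFn, lt_min_iff]
  constructor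
  · rintro ⟨j, ⟨hji, hjm⟩, rfl⟩
    exact ⟨⟨j, hjm⟩, hji, rfl⟩
  · rintro ⟨j, hji, rfl⟩
    exact ⟨j, ⟨hji, j.isLt⟩, rfl⟩

theorem isWeaklyRegular_ofFn_X (A : Type*) [CommRing A] (m : ℕ) :
    IsWeaklyRegular (MvPolynomial (Fin m) A)
      (List.ofFn (X : Fin m → MvPolynomial (Fin m) A)) := by
  refine ⟨fun i hi => ?_⟩
  rw [List.length_ofFn] at hi
  rw [isSMulRegular_quotient_iff_mem_of_smul_mem]
  intro p hp
  rw [smul_eq_mul, Ideal.mul_top, ofList_take_ofFn_X, mem_ideal_span_X_image] at hp ⊢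
  intro s hs
  obtain ⟨j, hj, hne⟩ := hp (Finsupp.single ⟨i, hi⟩ 1 + s) (by simpa [coeff_X_mul] using hs)
  have hij : (⟨i, hi⟩ : Fin m) ≠ j := by
    rintro rfl
    exact lt_irrefl i hj
  exact ⟨j, hj, by simpa [Finsupp.single_apply, hij] using hne⟩

variable (K : Type) [Field K] (n : ℕ)

theorem ofList_ofFn_X : Ideal.ofList (List.ofFn (X : Fin (n + 1) → PolyS K n)) = irrel K n := by
  simp only [Ideal.ofList, irrel, List.mem_ofFn]
  rfl

theorem irrel_ne_top : irrel K n ≠ ⊤ := by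
  intro h
  have hle : irrel K n ≤ RingHom.ker (constantCoeff (σ := Fin (n + 1)) (R := K)) :=
    Ideal.span_le.2 (by rintro _ ⟨i, rfl⟩; simp)
  exact RingHom.ker_ne_top _ (top_le_iff.1 (h ▸ hle))

theorem hasDepthGE_polyS : HasDepthGE (irrel K n) (n + 1) (PolyS K n) := by
  have htop : irrel K n • (⊤ : Ideal (PolyS K n)) ≠ ⊤ := by
    rw [smul_eq_mul, Ideal.mul_top]
    exact irrel_ne_top K n
  have hreg : IsRegular (PolyS K n) (List.ofFn (X : Fin (n + 1) → PolyS K n)) :=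
    ⟨isWeaklyRegular_ofFn_X K (n + 1), by rw [ofList_ofFn_X]; exact htop.symm⟩
  have hmem : ∀ p ∈ List.ofFn (X : Fin (n + 1) → PolyS K n), p ∈ irrel K n := fun p hp =>
    ofList_ofFn_X K n ▸ Ideal.subset_span hp
  simpa using HasDepthGE.of_isRegular hmem hreg htop.lt_top

end Polynomial

section Sym2

variable {R : Type} [CommRing R] {X Y Z : Type} [AddCommGroup X] [Module R X]
  [AddCommGroup Y] [Module R Y] [AddCommGroup Z] [Module R Z] {f : X →ₗ[R] Y} {g : Y →ₗ[R] Z}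

namespace Sym2M

variable (R X) in
/-- The projection `X ⊗ X → S²X`. -/
def mk : X ⊗[R] X →ₗ[R] Sym2M R X := Submodule.mkQ _

theorem mk_surjective : Function.Surjective (mk R X) := Submodule.mkQ_surjective _

theorem ker_mk : LinearMap.ker (mk R X) =
    LinearMap.range (LinearMap.id - (TensorProduct.comm R X X).toLinearMap) := by
  refine (Submodule.ker_mkQ _).trans (le_antisymm (Submodule.span_le.2 ?_) ?_)
  · rintro _ ⟨x, y, rfl⟩
    exact ⟨x ⊗ₜ y, rfl⟩
  · rw [LinearMap.range_eq_map, ← TensorProduct.span_tmul_eq_top, Submodule.map_span,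
      Submodule.span_le]
    rintro _ ⟨_, ⟨x, y, rfl⟩, rfl⟩
    exact Submodule.subset_span ⟨x, y, rfl⟩

theorem ker_mk_le_ker_iff {φ : X ⊗[R] X →ₗ[R] Y} :
    LinearMap.ker (mk R X) ≤ LinearMap.ker φ ↔
      φ ∘ₗ (TensorProduct.comm R X X).toLinearMap = φ := by
  rw [ker_mk, LinearMap.range_le_ker_iff, LinearMap.comp_sub, LinearMap.comp_id, sub_eq_zero,
    eq_comm]

theorem mk_comp_comm : mk R X ∘ₗ (TensorProduct.comm R X X).toLinearMap = mk R X :=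
  ker_mk_le_ker_iff.1 le_rfl

theorem mk_comm (t : X ⊗[R] X) : mk R X (TensorProduct.comm R X X t) = mk R X t :=
  LinearMap.congr_fun mk_comp_comm t

/-- The linear map `S²X → Y` induced by a linear map on `X ⊗ X` that is symmetric, i.e. invariant
under the swap of the two factors. -/
def lift (φ : X ⊗[R] X →ₗ[R] Y) (hφ : φ ∘ₗ (TensorProduct.comm R X X).toLinearMap = φ) :
    Sym2M R X →ₗ[R] Y :=
  Submodule.liftQ _ φ ((Submodule.ker_mkQ _).ge.trans (ker_mk_le_ker_iff.2 hφ))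

/-- The map `S²f : S²X → S²Y` induced by `f`, making `S²` a functor. -/
def map (f : X →ₗ[R] Y) : Sym2M R X →ₗ[R] Sym2M R Y :=
  lift (mk R Y ∘ₗ TensorProduct.map f f) (by
    rw [LinearMap.comp_assoc, TensorProduct.map_comp_comm_eq, ← LinearMap.comp_assoc, mk_comp_comm])

@[simp] theorem map_mk (f : X →ₗ[R] Y) (t : X ⊗[R] X) :
    map f (mk R X t) = mk R Y (TensorProduct.map f f t) := rfl

theorem map_surjective (hf : Function.Surjective f) : Function.Surjective (map f) :=
  .of_comp (g := mk R X) (mk_surjective.comp (TensorProduct.map_surjective hf hf))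

/-- The multiplication map `X ⊗ Y → S²Y`, `x ⊗ y ↦ f x · y`; for a presentation `X → Y → Z → 0` its
image is the kernel of `S²Y → S²Z`. -/
def mul (f : X →ₗ[R] Y) : X ⊗[R] Y →ₗ[R] Sym2M R Y := mk R Y ∘ₗ f.rTensor Y

theorem mul_lTensor (f : X →ₗ[R] Y) (t : X ⊗[R] X) : mul f (f.lTensor X t) = map f (mk R X t) :=
  congrArg (mk R Y) (LinearMap.congr_fun (LinearMap.rTensor_comp_lTensor (f := f) (g := f)) t)

theorem mk_lTensor (f : X →ₗ[R] Y) (t : Y ⊗[R] X) :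
    mk R Y (f.lTensor Y t) = mul f (TensorProduct.comm R Y X t) := by
  rw [mul, LinearMap.comp_apply, ← LinearMap.comm_comp_lTensor_comp_comm_eq]
  simp [mk_comm]

theorem exact_mul_map (hfg : Function.Exact f g) (hg : Function.Surjective g) :
    Function.Exact (mul f) (map g) := by
  intro z
  obtain ⟨t, rfl⟩ := mk_surjective z
  constructor
  · intro ht
    rw [map_mk, ← LinearMap.mem_ker, ker_mk] at ht
    obtain ⟨u, hu⟩ := ht
    obtain ⟨s, rfl⟩ := TensorProduct.map_surjective hg hg u
    have hker : t - (s - TensorProduct.comm R Y Y s) ∈ LinearMap.ker (TensorProduct.map g g) := by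
      rw [LinearMap.mem_ker, map_sub, ← hu, map_sub, TensorProduct.map_comm]
      exact sub_self _
    rw [TensorProduct.map_ker hfg hg hfg hg] at hker
    obtain ⟨_, ⟨v, rfl⟩, _, ⟨w, rfl⟩, hvw⟩ := Submodule.mem_sup.1 hker
    refine ⟨TensorProduct.comm R Y X v + w, ?_⟩
    calc mul f (TensorProduct.comm R Y X v + w)
        = mk R Y (f.lTensor Y v + f.rTensor Y w) := by rw [map_add, map_add, mk_lTensor]; rfl
      _ = mk R Y t := by rw [hvw, map_sub, map_sub, mk_comm, sub_self, sub_zero]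
  · rintro ⟨w, hw⟩
    rw [← hw, mul, LinearMap.comp_apply, map_mk, LinearMap.rTensor, TensorProduct.map_map,
      hfg.linearMap_comp_eq_zero, TensorProduct.map_zero_left, LinearMap.zero_apply, map_zero]

theorem exact_lTensor_mul (hfg : Function.Exact f g) (hg : Function.Surjective g)
    (hfZ : Function.Injective (f.rTensor Z)) (hf₂ : Function.Injective (map f)) :
    Function.Exact (f.lTensor X ∘ₗ (LinearMap.ker (mk R X)).subtype) (mul f) := by
  intro w
  constructor
  · intro hw
    obtain ⟨u, hu : u - TensorProduct.comm R Y Y u = f.rTensor Y w⟩ :=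
      ker_mk.le (LinearMap.mem_ker.2 hw)
    have hantisymm : TensorProduct.comm R Y Y (f.rTensor Y w) = - f.rTensor Y w := by
      rw [← hu]; simp
    have hgw : g.lTensor X w = 0 := by
      apply (injective_iff_map_eq_zero _).1 hfZ
      calc f.rTensor Z (g.lTensor X w) = g.lTensor Y (f.rTensor Y w) := by
            rw [← LinearMap.comp_apply, ← LinearMap.comp_apply, LinearMap.rTensor_comp_lTensor,
              LinearMap.lTensor_comp_rTensor]
        _ = - g.lTensor Y (TensorProduct.comm R Y Y (f.rTensor Y w)) := by
            rw [hantisymm, map_neg, neg_neg]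
        _ = - TensorProduct.comm R Z Y (g.rTensor Y (f.rTensor Y w)) := by
            rw [LinearMap.lTensor, TensorProduct.map_comm]; rfl
        _ = 0 := by
            rw [← LinearMap.rTensor_comp_apply, hfg.linearMap_comp_eq_zero]; simp
    obtain ⟨p, rfl⟩ := (lTensor_exact X hfg hg w).1 hgw
    rw [mul_lTensor, map_eq_zero_iff _ hf₂] at hw
    exact ⟨⟨p, hw⟩, rfl⟩
  · rintro ⟨⟨p, hp : mk R X p = 0⟩, rfl⟩
    exact (mul_lTensor f p).trans (by rw [hp, map_zero])

/-- Sorting the factors of a basis tensor gives a section that, unlike symmetrization, needs no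
division by `2`. -/
theorem exists_mk_comp_eq_id (F : Type) [AddCommGroup F] [Module R F] [Module.Free R F] :
    ∃ s : Sym2M R F →ₗ[R] F ⊗[R] F, mk R F ∘ₗ s = LinearMap.id := by
  let b := Module.Free.chooseBasis R F
  let : LinearOrder (Module.Free.ChooseBasisIndex R F) := IsWellOrder.linearOrder WellOrderingRel
  let φ : F ⊗[R] F →ₗ[R] F ⊗[R] F :=
    (b.tensorProduct b).constr R fun p => b (min p.1 p.2) ⊗ₜ b (max p.1 p.2)
  have hφ (i j) : φ (b i ⊗ₜ b j) = b (min i j) ⊗ₜ b (max i j) := by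
    rw [← Module.Basis.tensorProduct_apply, Module.Basis.constr_basis]
  have hφ_comm : φ ∘ₗ (TensorProduct.comm R F F).toLinearMap = φ :=
    (b.tensorProduct b).ext fun ⟨i, j⟩ => by
      simp [hφ, min_comm, max_comm]
  have hmk : mk R F ∘ₗ φ = mk R F := (b.tensorProduct b).ext fun ⟨i, j⟩ => by
    obtain hij | hij := le_total i j
    · simp [hφ, hij]
    · simpa [hφ, hij] using mk_comm (b i ⊗ₜ b j)
  refine ⟨lift φ hφ_comm, LinearMap.ext fun z => ?_⟩
  obtain ⟨t, rfl⟩ := mk_surjective z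
  exact LinearMap.congr_fun hmk t

end Sym2M

theorem SplitsAwayFrom.sym2Map {I : Ideal R} (hf : SplitsAwayFrom I f) :
    SplitsAwayFrom I (Sym2M.map f) := fun a ha => by
  obtain ⟨m, r, hr⟩ := hf a ha
  refine ⟨m + m, Sym2M.map r, LinearMap.ext fun z => ?_⟩
  obtain ⟨t, rfl⟩ := Sym2M.mk_surjective z
  simp [TensorProduct.map_map, hr, TensorProduct.map_smul_left, TensorProduct.map_smul_right,
    pow_add, mul_smul]

theorem Sym2M.hasDepthGE_of_free {I : Ideal R} {d : ℕ} (hR : HasDepthGE I d R) (F : Type)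
    [AddCommGroup F] [Module R F] [Module.Free R F] [Module.Finite R F] :
    HasDepthGE I d (Sym2M R F) := by
  obtain ⟨s, hs⟩ := exists_mk_comp_eq_id (R := R) F
  exact ((hR.of_free F).tensorProduct_free F).of_retract s (mk R F) hs

theorem Sym2M.hasDepthGE_of_exact [IsNoetherianRing R] {I : Ideal R} {d : ℕ}
    (hf : SplitsAwayFrom I f) (hfg : Function.Exact f g) (hg : Function.Surjective g)
    (hXX : HasDepthGE I (d + 2) (X ⊗[R] X)) (hXZ : HasDepthGE I 1 (X ⊗[R] Z))
    (hXY : HasDepthGE I (d + 1) (X ⊗[R] Y)) (hX : HasDepthGE I (d + 1) (Sym2M R X))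
    (hY : HasDepthGE I d (Sym2M R Y)) : HasDepthGE I d (Sym2M R Z) := by
  have hker : HasDepthGE I (d + 2) (LinearMap.ker (mk R X)) :=
    .of_exact_left (Submodule.injective_subtype _) (mk R X).exact_subtype_ker_map
      mk_surjective hXX hX
  have hinj : Function.Injective (f.lTensor X ∘ₗ (LinearMap.ker (mk R X)).subtype) :=
    ((hf.lTensor X).injective hXX).comp (Submodule.injective_subtype _)
  exact .of_exact_four hinj
    (exact_lTensor_mul hfg hg ((hf.rTensor Z).injective hXZ) (hf.sym2Map.injective hX))
    (exact_mul_map hfg hg) (map_surjective hg) hker hXY hY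

end Sym2

theorem exists_comp_subtype_range_eq_smul {R : Type*} [CommRing R] {X Y Z : Type*}
    [AddCommGroup X] [Module R X] [AddCommGroup Y] [Module R Y] [AddCommGroup Z] [Module R Z]
    [Module.Projective R Z] {f : X →ₗ[R] Y} {g : Y →ₗ[R] Z} (hfg : Function.Exact f g) {a : R}
    {r : Z →ₗ[R] LinearMap.range g} (hr : r ∘ₗ (LinearMap.range g).subtype = a • LinearMap.id) :
    ∃ r' : Y →ₗ[R] LinearMap.range f, r' ∘ₗ (LinearMap.range f).subtype = a • LinearMap.id := by
  obtain ⟨h, hh⟩ := Module.projective_lifting_property g.rangeRestrict r g.surjective_rangeRestrict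
  have hgh (z : Z) : g (h z) = r z := congrArg Subtype.val (LinearMap.congr_fun hh z)
  have hrg (y : Y) : (r (g y) : Z) = a • g y :=
    congrArg Subtype.val (LinearMap.congr_fun hr ⟨g y, y, rfl⟩)
  have hrange (y : Y) : (a • LinearMap.id - h ∘ₗ g : Y →ₗ[R] Y) y ∈ LinearMap.range f := by
    rw [← hfg.linearMap_ker_eq, LinearMap.mem_ker]
    simp [hgh, hrg]
  refine ⟨LinearMap.codRestrict _ _ hrange, LinearMap.ext fun ⟨y, x, hx⟩ => Subtype.ext ?_⟩
  have hgy : g y = 0 := hx ▸ hfg.apply_apply_eq_zero x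
  simp [hgy]

namespace MinimalResolution

attribute [instance] MinimalResolution.free MinimalResolution.finite

variable {K : Type} [Field K] {n : ℕ} {M : Type} [AddCommGroup M] [Module (PolyS K n) M]
  (res : MinimalResolution K n M)

/-- The syzygy module `P_j(M)`, the image of `L_{j+1} → L_j`. -/
noncomputable abbrev syzygy (j : ℕ) : Submodule (PolyS K n) (res.L j) := LinearMap.range (res.d j)

theorem exact_d (j : ℕ) : Function.Exact (res.d (j + 1)) (res.d j) :=
  LinearMap.exact_iff.2 (res.exact j).symm

theorem exact_subtype_rangeRestrict (j : ℕ) :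
    Function.Exact (res.syzygy (j + 1)).subtype (res.d j).rangeRestrict := by
  rw [LinearMap.exact_iff, LinearMap.ker_rangeRestrict, Submodule.range_subtype, syzygy, res.exact]

theorem exists_comp_subtype_syzygy_eq_smul {a : PolyS K n}
    (ha : a ∈ Module.annihilator (PolyS K n) M) (j : ℕ) :
    ∃ r : res.L j →ₗ[PolyS K n] res.syzygy j, r ∘ₗ (res.syzygy j).subtype = a • LinearMap.id := by
  induction j with
  | zero =>
    refine ⟨LinearMap.codRestrict _ (a • LinearMap.id) fun x => ?_, rfl⟩
    rw [syzygy, res.exact0, LinearMap.mem_ker, LinearMap.smul_apply, map_smul]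
    exact Module.mem_annihilator.1 ha _
  | succ j ih =>
    obtain ⟨r, hr⟩ := ih
    exact exists_comp_subtype_range_eq_smul (res.exact_d j) hr

theorem splitsAwayFrom_subtype_syzygy {c : ℕ}
    (hc : irrel K n ^ c ≤ Module.annihilator (PolyS K n) M) (j : ℕ) :
    SplitsAwayFrom (irrel K n) (res.syzygy j).subtype := fun _ ha =>
  ⟨c, res.exists_comp_subtype_syzygy_eq_smul (hc (Ideal.pow_mem_pow ha c)) j⟩

theorem subsingleton_syzygy : Subsingleton (res.syzygy (n + 1)) := by
  have hL : Subsingleton (res.L (n + 2)) :=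
    subsingleton_of_range_le_smul_top (isWeaklyRegular_ofFn_X K (n + 1))
      (by rw [ofList_ofFn_X]; exact irrel_ne_top K n) res.d res.exact_d
      (by rw [ofList_ofFn_X]; exact res.minimal) (by simp)
  exact (res.d (n + 1)).surjective_rangeRestrict.subsingleton

theorem hasDepthGE_tensorProduct_syzygy {c : ℕ}
    (hc : irrel K n ^ c ≤ Module.annihilator (PolyS K n) M) {Q : Type} [AddCommGroup Q]
    [Module (PolyS K n) Q] {s d j : ℕ} (hj : j + s = n + 1)
    (hQ : HasDepthGE (irrel K n) (d + s) Q) :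
    HasDepthGE (irrel K n) (d + 1) (Q ⊗[PolyS K n] res.syzygy j) := by
  induction s generalizing j d with
  | zero =>
    obtain rfl : j = n + 1 := hj
    have := res.subsingleton_syzygy
    exact .of_subsingleton
  | succ s ih =>
    have hnext : HasDepthGE (irrel K n) (d + 2) (Q ⊗[PolyS K n] res.syzygy (j + 1)) :=
      ih (by lia) (hQ.mono (by lia))
    exact .of_exact_right
      (((res.splitsAwayFrom_subtype_syzygy hc (j + 1)).lTensor Q).injective hnext)
      (lTensor_exact Q (res.exact_subtype_rangeRestrict j) (res.d j).surjective_rangeRestrict)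
      (LinearMap.lTensor_surjective Q (res.d j).surjective_rangeRestrict) hnext
      ((hQ.tensorProduct_free (res.L (j + 1))).mono (by lia))

theorem hasDepthGE_syzygy {c : ℕ} (hc : irrel K n ^ c ≤ Module.annihilator (PolyS K n) M)
    {j : ℕ} (hj : j ≤ n + 1) : HasDepthGE (irrel K n) (j + 1) (res.syzygy j) :=
  have hS : HasDepthGE (irrel K n) (j + (n + 1 - j)) (PolyS K n) :=
    (hasDepthGE_polyS K n).mono (by lia)
  (res.hasDepthGE_tensorProduct_syzygy hc (by lia) hS).of_linearEquiv (TensorProduct.lid _ _).symm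

theorem hasDepthGE_syzygy_tensorProduct_syzygy {c : ℕ}
    (hc : irrel K n ^ c ≤ Module.annihilator (PolyS K n) M) {i j d : ℕ} (hi : i ≤ n + 1)
    (hj : j ≤ n + 1) (hd : n + d ≤ i + j) :
    HasDepthGE (irrel K n) (d + 1) (res.syzygy i ⊗[PolyS K n] res.syzygy j) :=
  res.hasDepthGE_tensorProduct_syzygy hc (s := n + 1 - j) (by lia)
    ((res.hasDepthGE_syzygy hc hi).mono (by lia))

theorem hasDepthGE_sym2M_syzygy {c : ℕ} (hc : irrel K n ^ c ≤ Module.annihilator (PolyS K n) M)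
    {s j d : ℕ} (hj : j + s = n + 1) (hd : n + d ≤ 2 * j) :
    HasDepthGE (irrel K n) (d + 1) (Sym2M (PolyS K n) (res.syzygy j)) := by
  induction s generalizing j d with
  | zero =>
    obtain rfl : j = n + 1 := hj
    have := res.subsingleton_syzygy
    have := (Sym2M.mk_surjective (R := PolyS K n) (X := res.syzygy (n + 1))).subsingleton
    exact .of_subsingleton
  | succ s ih =>
    exact Sym2M.hasDepthGE_of_exact (res.splitsAwayFrom_subtype_syzygy hc (j + 1))
      (res.exact_subtype_rangeRestrict j) (res.d j).surjective_rangeRestrict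
      (res.hasDepthGE_syzygy_tensorProduct_syzygy hc (by lia) (by lia) (by lia))
      (res.hasDepthGE_syzygy_tensorProduct_syzygy hc (d := 0) (by lia) (by lia) (by lia))
      (((res.hasDepthGE_syzygy hc (by lia)).mono (by lia)).tensorProduct_free _)
      (ih (by lia) (by lia))
      (Sym2M.hasDepthGE_of_free ((hasDepthGE_polyS K n).mono (by lia)) _)

end MinimalResolution

theorem sym2_high_syzygy_vanishing_general
    (K : Type) [Field K] {n k i : ℕ} (hi : i + 2 * k < n)
    (M : Type) [AddCommGroup M] [Module (PolyS K n) M] {c : ℕ}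
    (hc : irrel K n ^ c ≤ Module.annihilator (PolyS K n) M)
    (res : MinimalResolution K n M) :
    Subsingleton (Hstar K n i (Sym2M (PolyS K n) (LinearMap.range (res.d (n - k))))) :=
  have hdepth : HasDepthGE (irrel K n) (n - 2 * k + 1) (Sym2M (PolyS K n) (res.syzygy (n - k))) :=
    res.hasDepthGE_sym2M_syzygy hc (s := k + 1) (by lia) (by lia)
  hdepth.subsingleton_localCohomology (by lia)

/-- Let `M` be a finite length graded `S`-module with `(n-k)`-th
syzygy bundle `P_{n-k}(M)` on `ℙⁿ`.  If `n ≥ 4k` and `k ≥ 2`, then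
`H^{2k-3}_*(S²P_{n-k}(M)) = 0` and `H^{2k-2}_*(S²P_{n-k}(M)) = 0`. -/
theorem sym2_high_syzygy_vanishing
    (K : Type) [Field K] (n k : ℕ) (hk : 2 ≤ k) (hn : 4 * k ≤ n)
    (M : Type) [AddCommGroup M] [Module (PolyS K n) M]
    (hMfl : IsGradedFiniteLength K n M)
    (res : MinimalResolution K n M) :
    Subsingleton (Hstar K n (2*k - 3)
      (Sym2M (PolyS K n) ↥(LinearMap.range (res.d (n - k))))) ∧
    Subsingleton (Hstar K n (2*k - 2)
      (Sym2M (PolyS K n) ↥(LinearMap.range (res.d (n - k))))) := by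
  obtain ⟨_, c, hc⟩ := hMfl
  exact ⟨sym2_high_syzygy_vanishing_general K (by lia) M hc res,
    sym2_high_syzygy_vanishing_general K (by lia) M hc res⟩
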